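/- arXiv:2603.29348 — 3 statements merged into one kernel-verified Lean document; each statement's English description precedes it below -/
import Mathlib

section
/- Let ψ : ℝ^n → ℝ be μ-strongly convex (μ > 0) and f_1, …, f_m : ℝ^n → ℝ convex and differentiable. Fix x ∈ ℝ^n, x* ∈ ∂ψ(x), a subset J ⊆ {1,…,m}, weights w_i > 0 with ∑_{i∈J} w_i = 1, a stepsize t ≥ 0, and set g = ∑_{i∈J} w_i ∇f_i(x), x⁺* = x* − t·g, x⁺ = ∇ψ*(x⁺*). Then x⁺* ∈ ∂ψ(x⁺), and for every z ∈ ℝ^n: D_ψ^{x⁺*}(x⁺, z) ≤ D_ψ^{x*}(x, z) − t·∑_{i∈J} w_i(f_i(x) − f_i(z)) + (t²/(2μ))·‖g‖². -/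
/-!
Every `p` is a subgradient of `ψ` at some `u`: the tilted function `ψ - ⟪p, ·⟫` is continuous, and
strong convexity at the given point `x` makes its sublevel sets bounded, so it attains a minimum
(`exists_isSubgrad`). Completing the square (`inner_sub_sq_le`) in the strong convexity inequality
at such a `u` gives
`⟪q - p, u⟫ ≤ ψ*(q) - ψ*(p) ≤ ⟪q - p, u⟫ + ‖q - p‖² / (2μ)`, whence `∇ψ*(p) = u`
(`hasGradientAt_fenchel`). This identifies `x⁺` and gives the subgradient claim. The descent
estimate is the same completion of the square, now at `x` with `p - xs = -t g`, combined with the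
gradient inequality for each `f i`.
-/

open MeasureTheory ProbabilityTheory RealInnerProductSpace
open scoped BigOperators

noncomputable section

/-- `xs` is a subgradient of `ψ` at `x`: `ψ(y) ≥ ψ(x) + ⟨xs, y - x⟩` for all `y`. -/
def IsSubgrad {n : ℕ} (ψ : EuclideanSpace ℝ (Fin n) → ℝ) (x xs : EuclideanSpace ℝ (Fin n)) : Prop :=
  ∀ y, ψ x + ⟪xs, y - x⟫ ≤ ψ y

/-- Bregman distance `D_ψ^{xs}(x, y) = ψ(y) - ψ(x) - ⟨xs, y - x⟩`. -/
def Breg {n : ℕ} (ψ : EuclideanSpace ℝ (Fin n) → ℝ) (x xs y : EuclideanSpace ℝ (Fin n)) : ℝ :=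
  ψ y - ψ x - ⟪xs, y - x⟫

/-- `ψ` is `α`-strongly convex:
`ψ(y) ≥ ψ(x) + ⟨xs, y - x⟩ + (α/2)‖y - x‖²` for all `x, y` and all subgradients `xs ∈ ∂ψ(x)`. -/
def SubgradStrongConvex {n : ℕ} (ψ : EuclideanSpace ℝ (Fin n) → ℝ) (α : ℝ) : Prop :=
  ∀ x y xs, IsSubgrad ψ x xs → ψ x + ⟪xs, y - x⟫ + α / 2 * ‖y - x‖ ^ 2 ≤ ψ y

/-- Fenchel conjugate `ψ*(p) = sup_z (⟨p, z⟩ - ψ(z))`. -/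
def fenchel {n : ℕ} (ψ : EuclideanSpace ℝ (Fin n) → ℝ) (p : EuclideanSpace ℝ (Fin n)) : ℝ :=
  ⨆ z, (⟪p, z⟫ - ψ z)

/-- `xhat` is the Bregman projection of `x` onto `C` w.r.t. `ψ` and the subgradient `xs`:
it belongs to `C` and minimizes `y ↦ D_ψ^{xs}(x, y)` over `C`. -/
def IsBregProj {n : ℕ} (ψ : EuclideanSpace ℝ (Fin n) → ℝ) (x xs : EuclideanSpace ℝ (Fin n))
    (C : Set (EuclideanSpace ℝ (Fin n))) (xhat : EuclideanSpace ℝ (Fin n)) : Prop :=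
  xhat ∈ C ∧ ∀ y ∈ C, Breg ψ x xs xhat ≤ Breg ψ x xs y

/-- The proximity objective `F(x) = (1/m) ∑_{i=1}^m f_i(x)`. -/
def Fobj {n m : ℕ} (f : Fin m → EuclideanSpace ℝ (Fin n) → ℝ) (v : EuclideanSpace ℝ (Fin n)) : ℝ :=
  (m : ℝ)⁻¹ * ∑ i, f i v

/-- The set of (global) minimizers of `F = (1/m) ∑ f_i`. -/
def ArgminSet {n m : ℕ} (f : Fin m → EuclideanSpace ℝ (Fin n) → ℝ) :
    Set (EuclideanSpace ℝ (Fin n)) :=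
  {z | ∀ y, Fobj f z ≤ Fobj f y}

/-- Squared Bregman distance from `z` (with subgradient `zs`) to a set `X`:
`inf_{w ∈ X} D_ψ^{zs}(z, w)`. -/
def distSq {n : ℕ} (ψ : EuclideanSpace ℝ (Fin n) → ℝ) (z zs : EuclideanSpace ℝ (Fin n))
    (X : Set (EuclideanSpace ℝ (Fin n))) : ℝ :=
  ⨅ w : X, Breg ψ z zs (w : EuclideanSpace ℝ (Fin n))

/-- Young's inequality `⟪a, b⟫ ≤ ‖a‖² / (2μ) + (μ/2) ‖b‖²`. -/
lemma inner_sub_sq_le {n : ℕ} {μ : ℝ} (hμ : 0 < μ) (a b : EuclideanSpace ℝ (Fin n)) :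
    ⟪a, b⟫ - μ / 2 * ‖b‖ ^ 2 ≤ 1 / (2 * μ) * ‖a‖ ^ 2 := by
  have h1 : ⟪a, b⟫ ≤ ‖a‖ * ‖b‖ := real_inner_le_norm a b
  have h2 : 1 / (2 * μ) * ‖a‖ ^ 2 - ‖a‖ * ‖b‖ + μ / 2 * ‖b‖ ^ 2
      = 1 / (2 * μ) * (‖a‖ - μ * ‖b‖) ^ 2 := by
    field_simp
    ring
  have h3 : 0 ≤ 1 / (2 * μ) * (‖a‖ - μ * ‖b‖) ^ 2 := by positivity
  linarith

/-- The subdifferential of a strongly convex function is surjective. The subgradient at one point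
is what makes the strong convexity inequality available. -/
lemma exists_isSubgrad {n : ℕ} {ψ : EuclideanSpace ℝ (Fin n) → ℝ} {μ : ℝ} (hμ : 0 < μ)
    (hψ : ConvexOn ℝ Set.univ ψ) (hsc : SubgradStrongConvex ψ μ)
    {x xs : EuclideanSpace ℝ (Fin n)} (hxs : IsSubgrad ψ x xs) (p : EuclideanSpace ℝ (Fin n)) :
    ∃ u, IsSubgrad ψ u p := by
  have hc : Continuous fun y => ψ y - ⟪p, y⟫ := by
    have := hψ.locallyLipschitz.continuous
    fun_prop
  obtain ⟨u, hu⟩ := hc.exists_forall_le_of_isBounded x (by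
    refine Metric.isBounded_closedBall (x := x) (r := 2 * ‖p - xs‖ / μ) |>.subset ?_
    intro y hy
    simp only [Set.mem_ofPred_eq] at hy
    rw [Metric.mem_closedBall, dist_eq_norm, le_div_iff₀ hμ]
    have h1 := hsc x y xs hxs
    have h2 : ⟪p - xs, y - x⟫ ≤ ‖p - xs‖ * ‖y - x‖ := real_inner_le_norm _ _
    simp only [inner_sub_left, inner_sub_right] at h1 h2
    have h3 : μ / 2 * ‖y - x‖ ^ 2 ≤ ‖p - xs‖ * ‖y - x‖ := by linarith
    rcases (norm_nonneg (y - x)).eq_or_lt with h0 | h0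
    · rw [← h0]
      simp
    · have : μ / 2 * ‖y - x‖ ≤ ‖p - xs‖ := by
        refine le_of_mul_le_mul_right ?_ h0
        linarith
      linarith)
  refine ⟨u, fun y => ?_⟩
  have := hu y
  rw [inner_sub_right]
  linarith

/-- The Fenchel–Young equality at a subgradient. -/
lemma fenchel_eq {n : ℕ} {ψ : EuclideanSpace ℝ (Fin n) → ℝ}
    {u p : EuclideanSpace ℝ (Fin n)} (h : IsSubgrad ψ u p) :
    fenchel ψ p = ⟪p, u⟫ - ψ u := by
  have hb : ∀ z, ⟪p, z⟫ - ψ z ≤ ⟪p, u⟫ - ψ u := fun z => by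
    have := h z
    rw [inner_sub_right] at this
    linarith
  exact le_antisymm (ciSup_le hb)
    (le_ciSup (f := fun z => ⟪p, z⟫ - ψ z) ⟨_, Set.forall_mem_range.2 hb⟩ u)

/-- `∇ψ*` inverts the subdifferential: if `p ∈ ∂ψ(u)` then `∇ψ*(p) = u`. -/
lemma hasGradientAt_fenchel {n : ℕ} {ψ : EuclideanSpace ℝ (Fin n) → ℝ} {μ : ℝ} (hμ : 0 < μ)
    (hψ : ConvexOn ℝ Set.univ ψ) (hsc : SubgradStrongConvex ψ μ)
    {u p : EuclideanSpace ℝ (Fin n)} (h : IsSubgrad ψ u p) :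
    HasGradientAt (fenchel ψ) u p := by
  rw [hasGradientAt_iff_isLittleO]
  refine Asymptotics.IsBigO.trans_isLittleO (g := fun q => ‖q - p‖ ^ 2) ?_
    (Asymptotics.isLittleO_pow_sub_sub p one_lt_two)
  refine Asymptotics.IsBigO.of_bound (1 / (2 * μ)) (Filter.Eventually.of_forall fun q => ?_)
  obtain ⟨v, hv⟩ := exists_isSubgrad hμ hψ hsc h q
  rw [fenchel_eq h, fenchel_eq hv, Real.norm_eq_abs, Real.norm_eq_abs,
    abs_of_nonneg (sq_nonneg ‖q - p‖)]
  have h1 := hsc u v p h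
  have h2 := hv u
  have h3 := inner_sub_sq_le hμ (q - p) (v - u)
  rw [real_inner_comm (q - p) u]
  simp only [inner_sub_left, inner_sub_right] at h1 h2 h3 ⊢
  rw [abs_of_nonneg (by linarith)]
  linarith

/-- The gradient inequality: the gradient of a convex function is a subgradient. -/
lemma isSubgrad_of_hasGradientAt {n : ℕ} {f : EuclideanSpace ℝ (Fin n) → ℝ}
    (hf : ConvexOn ℝ Set.univ f) {g x : EuclideanSpace ℝ (Fin n)} (hg : HasGradientAt f g x) :
    IsSubgrad f x g := by
  intro z
  have hline : ConvexOn ℝ Set.univ (f ∘ AffineMap.lineMap (k := ℝ) x z) := by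
    simpa using hf.comp_affineMap (AffineMap.lineMap (k := ℝ) x z)
  have hd : HasDerivAt (f ∘ AffineMap.lineMap (k := ℝ) x z) ⟪g, z - x⟫ 0 := by
    have h1 : HasFDerivAt f (InnerProductSpace.toDual ℝ _ g)
        (AffineMap.lineMap (k := ℝ) x z 0) := by
      simpa using hg.hasFDerivAt
    simpa using h1.comp_hasDerivAt (0 : ℝ) AffineMap.hasDerivAt_lineMap
  have := hline.le_slope_of_hasDerivAt (Set.mem_univ 0) (Set.mem_univ 1) one_pos hd
  simp [slope_def_field] at this
  linarith

/-- one step of stochastic mirror descent. With `g = ∑_{i∈J} w_i ∇f_i(x)`,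
`x⁺* = xs − t·g` and `x⁺ = ∇ψ*(x⁺*)`, one has `x⁺* ∈ ∂ψ(x⁺)` and for every `z`:
`D_ψ^{x⁺*}(x⁺, z) ≤ D_ψ^{xs}(x, z) − t·∑ w_i (f_i(x) − f_i(z)) + (t²/(2μ))‖g‖²`. -/
theorem stmt7 {n m : ℕ} (ψ : EuclideanSpace ℝ (Fin n) → ℝ) (μ : ℝ) (hμ : 0 < μ)
    (hψconv : ConvexOn ℝ Set.univ ψ) (hsc : SubgradStrongConvex ψ μ)
    (f : Fin m → EuclideanSpace ℝ (Fin n) → ℝ)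
    (hfconv : ∀ i, ConvexOn ℝ Set.univ (f i))
    (f' : Fin m → EuclideanSpace ℝ (Fin n) → EuclideanSpace ℝ (Fin n))
    (hdiff : ∀ i z, HasGradientAt (f i) (f' i z) z)
    (x xs : EuclideanSpace ℝ (Fin n)) (hxs : IsSubgrad ψ x xs)
    (J : Finset (Fin m)) (w : Fin m → ℝ)
    (hw : ∀ i ∈ J, 0 < w i) (hwsum : ∑ i ∈ J, w i = 1)
    (t : ℝ) (ht : 0 ≤ t) :
    IsSubgrad ψ (gradient (fenchel ψ) (xs - t • ∑ i ∈ J, w i • f' i x))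
      (xs - t • ∑ i ∈ J, w i • f' i x) ∧
    ∀ z, Breg ψ (gradient (fenchel ψ) (xs - t • ∑ i ∈ J, w i • f' i x))
        (xs - t • ∑ i ∈ J, w i • f' i x) z ≤
      Breg ψ x xs z - t * ∑ i ∈ J, w i * (f i x - f i z) +
        t ^ 2 / (2 * μ) * ‖∑ i ∈ J, w i • f' i x‖ ^ 2 := by
  set g := ∑ i ∈ J, w i • f' i x with hg
  obtain ⟨u, hu⟩ := exists_isSubgrad hμ hψconv hsc hxs (xs - t • g)
  rw [(hasGradientAt_fenchel hμ hψconv hsc hu).gradient]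
  refine ⟨hu, fun z => ?_⟩
  have hf : ∑ i ∈ J, w i * (f i x - f i z) ≤ ⟪g, x - z⟫ := by
    rw [hg, sum_inner]
    refine Finset.sum_le_sum fun i hi => ?_
    rw [real_inner_smul_left]
    refine mul_le_mul_of_nonneg_left ?_ (hw i hi).le
    have := isSubgrad_of_hasGradientAt (hfconv i) (hdiff i x) z
    rw [inner_sub_right] at this ⊢
    linarith
  have h1 := mul_le_mul_of_nonneg_left hf ht
  have h2 := hsc x u xs hxs
  have h3 := inner_sub_sq_le hμ (-(t • g)) (u - x)
  have h4 : 1 / (2 * μ) * ‖-(t • g)‖ ^ 2 = t ^ 2 / (2 * μ) * ‖g‖ ^ 2 := by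
    rw [norm_neg, norm_smul, mul_pow, Real.norm_eq_abs, sq_abs]
    ring
  rw [h4] at h3
  unfold Breg
  simp only [inner_sub_left, inner_sub_right, inner_neg_left, real_inner_smul_left] at h1 h2 h3 ⊢
  linarith
end
end

section
/- Let ψ : ℝ^n → ℝ be μ-strongly convex and differentiable with L_ψ-Lipschitz gradient, and let f_1, …, f_m : ℝ^n → ℝ be μ_f-strongly convex (μ_f > 0) and differentiable with L_i-Lipschitz gradients, nonnegative, with f_i(x) = 0 if and only if x ∈ C_i; suppose x̂ ∈ C = ∩_{i=1}^m C_i (nonempty); L_max = max_i L_i. Fix x ∈ ℝ^n, a subset J ⊆ {1,…,m}, weights w_i > 0 with ∑_{i∈J} w_i = 1, a stepsize t ∈ (0, μ/L_max], and let x⁺ = ∇ψ*(∇ψ(x) − t·∑_{i∈J} w_i∇f_i(x)). Then D_ψ(x⁺, x̂) ≤ ( 1 − (μ_f/L_ψ)·t )·D_ψ(x, x̂), where D_ψ(u, v) = ψ(v) − ψ(u) − ⟨∇ψ(u), v − u⟩. -/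
/-!
Write `z = ∇ψ*(∇ψ x - t g)` with `g = ∑ w i • ∇f i x`. Since `∇ψ` is surjective
(`exists_grad_eq`) and inverted by `∇ψ*` (`hasGradientAt_fenchel`), `∇ψ z = ∇ψ x - t g`, and the
three-point identity reads `D(z, x̂) = D(x, x̂) - D(x, z) + t ⟨g, x̂ - z⟩`. Strong convexity of the
`f i` together with the descent lemma (`descent_lemma`), `f i x̂ = 0` and `f i z ≥ 0` give
`⟨g, x̂ - z⟩ ≤ Lmax/2 ‖z - x‖² - μf/2 ‖x̂ - x‖²`. As `t Lmax ≤ μ`, the first term is absorbed by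
`D(x, z) ≥ μ/2 ‖z - x‖²`; the second is at least `(μf/Lψ) D(x, x̂)` in size because
`D(x, x̂) ≤ Lψ/2 ‖x̂ - x‖²`, again by the descent lemma.
-/

open MeasureTheory ProbabilityTheory RealInnerProductSpace
open scoped BigOperators

noncomputable section

/-- The descent lemma: a function with `K`-Lipschitz gradient lies below the quadratic
`h u + ⟨∇h u, v - u⟩ + K/2 ‖v - u‖²`. -/
theorem descent_lemma {n : ℕ} (h : EuclideanSpace ℝ (Fin n) → ℝ)
    (h' : EuclideanSpace ℝ (Fin n) → EuclideanSpace ℝ (Fin n))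
    (hd : ∀ z, HasGradientAt h (h' z) z) (K : ℝ)
    (hlip : ∀ u v, ‖h' u - h' v‖ ≤ K * ‖u - v‖) (u v : EuclideanSpace ℝ (Fin n)) :
    h v ≤ h u + ⟪h' u, v - u⟫ + K / 2 * ‖v - u‖ ^ 2 := by
  set d := v - u with hd_def
  -- Along the segment, the gap to the quadratic has nonpositive derivative.
  let φ : ℝ → ℝ := fun s => h (u + s • d) - s * ⟪h' u, d⟫ - K / 2 * ‖d‖ ^ 2 * s ^ 2
  have hφ : ∀ s, HasDerivAt φ (⟪h' (u + s • d), d⟫ - ⟪h' u, d⟫ - K * ‖d‖ ^ 2 * s) s := by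
    intro s
    have h1 : HasDerivAt (fun s : ℝ => u + s • d) d s := by
      simpa using ((hasDerivAt_id s).smul_const d).const_add u
    have h2 := (hd (u + s • d)).hasFDerivAt.comp_hasDerivAt s h1
    rw [InnerProductSpace.toDual_apply_apply] at h2
    have h3 := (h2.sub ((hasDerivAt_id s).mul_const ⟪h' u, d⟫)).sub
      (((hasDerivAt_id s).pow 2).const_mul (K / 2 * ‖d‖ ^ 2))
    refine h3.congr_deriv ?_
    simp
    ring
  have hanti : AntitoneOn φ (Set.Icc 0 1) := by
    refine antitoneOn_of_deriv_nonpos (convex_Icc 0 1)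
      (fun s _ => (hφ s).continuousAt.continuousWithinAt)
      (fun s _ => (hφ s).differentiableAt.differentiableWithinAt) ?_
    intro s hs
    rw [interior_Icc] at hs
    rw [(hφ s).deriv, ← inner_sub_left]
    have h1 := real_inner_le_norm (h' (u + s • d) - h' u) d
    have h2 := hlip (u + s • d) u
    rw [add_sub_cancel_left, norm_smul, Real.norm_of_nonneg hs.1.le] at h2
    have h3 := mul_le_mul_of_nonneg_right h2 (norm_nonneg d)
    nlinarith
  have := hanti (Set.left_mem_Icc.2 zero_le_one) (Set.right_mem_Icc.2 zero_le_one) zero_le_one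
  have hv : u + d = v := by simp [hd_def]
  simp only [φ, one_smul, zero_smul, add_zero, hv] at this
  linarith

/-- The gradient of a differentiable strongly convex function is surjective: `p` is attained at the
minimizer of the coercive function `z ↦ ψ z - ⟨p, z⟩`. -/
theorem exists_grad_eq {n : ℕ} (ψ : EuclideanSpace ℝ (Fin n) → ℝ) (μ : ℝ) (hμ : 0 < μ)
    (ψ' : EuclideanSpace ℝ (Fin n) → EuclideanSpace ℝ (Fin n))
    (hψdiff : ∀ z, HasGradientAt ψ (ψ' z) z)
    (hψsc : ∀ u v, ψ u + ⟪ψ' u, v - u⟫ + μ / 2 * ‖v - u‖ ^ 2 ≤ ψ v)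
    (p : EuclideanSpace ℝ (Fin n)) : ∃ z, ψ' z = p := by
  have hc : Continuous fun z => ψ z - ⟪p, z⟫ := by
    have : Continuous ψ := continuous_iff_continuousAt.2 fun z => (hψdiff z).continuousAt
    fun_prop
  have hlow : ∀ z, ψ 0 + ‖z‖ * (μ / 2 * ‖z‖ - ‖ψ' 0 - p‖) ≤ ψ z - ⟪p, z⟫ := by
    intro z
    have h1 := hψsc 0 z
    have h2 := neg_le_of_abs_le (abs_real_inner_le_norm (ψ' 0 - p) z)
    rw [inner_sub_left] at h2
    rw [sub_zero] at h1
    nlinarith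
  have htop : Filter.Tendsto (fun z : EuclideanSpace ℝ (Fin n) => ψ z - ⟪p, z⟫)
      (Filter.cocompact _) Filter.atTop := by
    refine Filter.tendsto_atTop_mono hlow ?_
    refine Filter.tendsto_atTop_add_const_left _ _ ?_
    have hn := tendsto_norm_cocompact_atTop (E := EuclideanSpace ℝ (Fin n))
    refine hn.atTop_mul_atTop₀ ?_
    exact Filter.tendsto_atTop_add_const_right _ _ (hn.const_mul_atTop (by positivity))
  obtain ⟨z, hz⟩ := hc.exists_forall_le htop
  refine ⟨z, ?_⟩
  have hloc : IsLocalMin (fun z => ψ z - ⟪p, z⟫) z := Filter.Eventually.of_forall hz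
  have hder := (hψdiff z).hasFDerivAt.sub
    ((InnerProductSpace.toDual ℝ (EuclideanSpace ℝ (Fin n)) p).hasFDerivAt (x := z))
  have h0 := hloc.hasFDerivAt_eq_zero hder
  rw [← map_sub] at h0
  exact sub_eq_zero.1 ((map_eq_zero_iff _ (LinearIsometryEquiv.injective _)).1 h0)

/-- `∇ψ*` is a left inverse of `∇ψ`: the error of the linearization of `ψ*` at `∇ψ z` with
slope `z` lies between `0` and `‖q - ∇ψ z‖² / (2μ)`. -/
theorem hasGradientAt_fenchel_s18 {n : ℕ} (ψ : EuclideanSpace ℝ (Fin n) → ℝ) (μ : ℝ) (hμ : 0 < μ)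
    (ψ' : EuclideanSpace ℝ (Fin n) → EuclideanSpace ℝ (Fin n))
    (hψsc : ∀ u v, ψ u + ⟪ψ' u, v - u⟫ + μ / 2 * ‖v - u‖ ^ 2 ≤ ψ v)
    (z : EuclideanSpace ℝ (Fin n)) : HasGradientAt (fenchel ψ) z (ψ' z) := by
  set p := ψ' z with hp
  have hub : ∀ q v, ⟪q, v⟫ - ψ v ≤ ⟪q, z⟫ - ψ z + 1 / (2 * μ) * ‖q - p‖ ^ 2 := by
    intro q v
    have h1 := hψsc z v
    have h2 := real_inner_le_norm (q - p) (v - z)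
    have h3 : ‖q - p‖ * ‖v - z‖ ≤ μ / 2 * ‖v - z‖ ^ 2 + 1 / (2 * μ) * ‖q - p‖ ^ 2 := by
      have : μ / 2 * ‖v - z‖ ^ 2 + 1 / (2 * μ) * ‖q - p‖ ^ 2 - ‖q - p‖ * ‖v - z‖
          = 1 / (2 * μ) * (μ * ‖v - z‖ - ‖q - p‖) ^ 2 := by
        field_simp
        ring
      have : 0 ≤ 1 / (2 * μ) * (μ * ‖v - z‖ - ‖q - p‖) ^ 2 := by positivity
      linarith
    rw [← hp] at h1
    simp only [inner_sub_left, inner_sub_right] at h1 h2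
    linarith
  have hle : ∀ q, fenchel ψ q ≤ ⟪q, z⟫ - ψ z + 1 / (2 * μ) * ‖q - p‖ ^ 2 :=
    fun q => ciSup_le (hub q)
  have hge : ∀ q, ⟪q, z⟫ - ψ z ≤ fenchel ψ q := fun q =>
    le_ciSup (f := fun v => ⟪q, v⟫ - ψ v) ⟨_, Set.forall_mem_range.2 (hub q)⟩ z
  have hval : fenchel ψ p = ⟪p, z⟫ - ψ z := le_antisymm (by simpa using hle p) (hge p)
  rw [hasGradientAt_iff_isLittleO]
  have hO : (fun q => fenchel ψ q - fenchel ψ p - ⟪z, q - p⟫) =O[nhds p]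
      fun q => ‖q - p‖ ^ 2 := by
    refine Asymptotics.IsBigO.of_bound (1 / (2 * μ)) (Filter.Eventually.of_forall fun q => ?_)
    have h1 := hle q
    have h2 := hge q
    rw [hval, inner_sub_right, real_inner_comm q z, real_inner_comm p z, Real.norm_eq_abs,
      Real.norm_of_nonneg (by positivity), abs_le]
    constructor
    · have : 0 ≤ 1 / (2 * μ) * ‖q - p‖ ^ 2 := by positivity
      linarith
    · linarith
  refine hO.trans_isLittleO ?_
  have hlit := Asymptotics.isLittleO_pow_sub_sub p one_lt_two
  simpa using hlit

/-- one-step linear contraction to the solution of the bilevel problem: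
for smooth strongly convex `ψ` and strongly convex `f_i`, with `x̂ ∈ C` and stepsize
`t ∈ (0, μ/L_max]`, the step `x⁺ = ∇ψ*(∇ψ(x) − t·∑_{i∈J} w_i ∇f_i(x))` satisfies
`D_ψ(x⁺, x̂) ≤ (1 − (μ_f/L_ψ)·t)·D_ψ(x, x̂)`. -/
theorem stmt18 {n m : ℕ} (hm : 0 < m)
    (ψ : EuclideanSpace ℝ (Fin n) → ℝ) (μ : ℝ) (hμ : 0 < μ)
    (ψ' : EuclideanSpace ℝ (Fin n) → EuclideanSpace ℝ (Fin n))
    (hψdiff : ∀ z, HasGradientAt ψ (ψ' z) z)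
    (hψsc : ∀ u v, ψ u + ⟪ψ' u, v - u⟫ + μ / 2 * ‖v - u‖ ^ 2 ≤ ψ v)
    (Lψ : ℝ) (hLψ : 0 < Lψ)
    (hψlip : ∀ u v, ‖ψ' u - ψ' v‖ ≤ Lψ * ‖u - v‖)
    (f : Fin m → EuclideanSpace ℝ (Fin n) → ℝ)
    (C : Fin m → Set (EuclideanSpace ℝ (Fin n)))
    (f' : Fin m → EuclideanSpace ℝ (Fin n) → EuclideanSpace ℝ (Fin n))
    (hdiff : ∀ i z, HasGradientAt (f i) (f' i z) z)
    (μf : ℝ) (hμf : 0 < μf)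
    (hfsc : ∀ i u v, f i u + ⟪f' i u, v - u⟫ + μf / 2 * ‖v - u‖ ^ 2 ≤ f i v)
    (L : Fin m → ℝ) (hL : ∀ i, 0 < L i)
    (hlip : ∀ i z w, ‖f' i z - f' i w‖ ≤ L i * ‖z - w‖)
    (Lmax : ℝ) (hLmax : Lmax = ⨆ i, L i)
    (hnonneg : ∀ i z, 0 ≤ f i z)
    (hzero : ∀ i z, f i z = 0 ↔ z ∈ C i)
    (xhat : EuclideanSpace ℝ (Fin n)) (hxhat : xhat ∈ ⋂ i, C i)
    (x : EuclideanSpace ℝ (Fin n))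
    (J : Finset (Fin m)) (w : Fin m → ℝ)
    (hw : ∀ i ∈ J, 0 < w i) (hwsum : ∑ i ∈ J, w i = 1)
    (t : ℝ) (htpos : 0 < t) (htle : t ≤ μ / Lmax) :
    Breg ψ (gradient (fenchel ψ) (ψ' x - t • ∑ i ∈ J, w i • f' i x))
        (ψ' (gradient (fenchel ψ) (ψ' x - t • ∑ i ∈ J, w i • f' i x))) xhat ≤
      (1 - μf / Lψ * t) * Breg ψ x (ψ' x) xhat := by
  set g := ∑ i ∈ J, w i • f' i x with hg
  obtain ⟨z, hz⟩ := exists_grad_eq ψ μ hμ ψ' hψdiff hψsc (ψ' x - t • g)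
  have hgrad : gradient (fenchel ψ) (ψ' x - t • g) = z := by
    rw [← hz]
    exact (hasGradientAt_fenchel_s18 ψ μ hμ ψ' hψsc z).gradient
  rw [hgrad, hz]
  have : Nonempty (Fin m) := ⟨⟨0, hm⟩⟩
  have hLle : ∀ i, L i ≤ Lmax := fun i => hLmax ▸ le_ciSup (Set.finite_range L).bddAbove i
  have hLpos : 0 < Lmax := (hL ⟨0, hm⟩).trans_le (hLle _)
  have htL : t * Lmax ≤ μ := (le_div_iff₀ hLpos).1 htle
  -- `f i xhat = 0` bounds `⟨∇f i x, xhat - x⟩` by strong convexity, and `f i z ≥ 0` bounds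
  -- `⟨∇f i x, x - z⟩` by the descent lemma; the values `f i x` cancel in the sum.
  have hi : ∀ i, ⟪f' i x, xhat - z⟫ ≤ Lmax / 2 * ‖z - x‖ ^ 2 - μf / 2 * ‖xhat - x‖ ^ 2 := by
    intro i
    have h0 : f i xhat = 0 := (hzero i xhat).2 (Set.mem_iInter.1 hxhat i)
    have h1 := hfsc i x xhat
    have h2 := descent_lemma (f i) (f' i) (hdiff i) (L i) (hlip i) x z
    have h3 := hnonneg i z
    have h4 := mul_le_mul_of_nonneg_right (hLle i) (sq_nonneg ‖z - x‖)
    simp only [inner_sub_right] at h1 h2 ⊢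
    linarith
  have hgi : ⟪g, xhat - z⟫ ≤ Lmax / 2 * ‖z - x‖ ^ 2 - μf / 2 * ‖xhat - x‖ ^ 2 := by
    rw [hg, sum_inner]
    calc ∑ i ∈ J, ⟪w i • f' i x, xhat - z⟫
        ≤ ∑ i ∈ J, w i * (Lmax / 2 * ‖z - x‖ ^ 2 - μf / 2 * ‖xhat - x‖ ^ 2) := by
          refine Finset.sum_le_sum fun i hiJ => ?_
          rw [real_inner_smul_left]
          exact mul_le_mul_of_nonneg_left (hi i) (hw i hiJ).le
      _ = _ := by rw [← Finset.sum_mul, hwsum, one_mul]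
  have hthree : Breg ψ z (ψ' x - t • g) xhat
      = Breg ψ x (ψ' x) xhat - Breg ψ x (ψ' x) z + t * ⟪g, xhat - z⟫ := by
    simp only [Breg, inner_sub_left, inner_sub_right, real_inner_smul_left]
    ring
  have hlow : μ / 2 * ‖z - x‖ ^ 2 ≤ Breg ψ x (ψ' x) z := by
    have := hψsc x z
    simp only [Breg]
    linarith
  have hup : Breg ψ x (ψ' x) xhat ≤ Lψ / 2 * ‖xhat - x‖ ^ 2 := by
    have := descent_lemma ψ ψ' hψdiff Lψ hψlip x xhat
    simp only [Breg]
    linarith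
  have h1 := mul_le_mul_of_nonneg_left hgi htpos.le
  have h2 := mul_le_mul_of_nonneg_right htL (sq_nonneg ‖z - x‖)
  have h3 : μf / Lψ * t * Breg ψ x (ψ' x) xhat ≤ t * (μf / 2 * ‖xhat - x‖ ^ 2) := by
    calc μf / Lψ * t * Breg ψ x (ψ' x) xhat
        ≤ μf / Lψ * t * (Lψ / 2 * ‖xhat - x‖ ^ 2) :=
          mul_le_mul_of_nonneg_left hup (by positivity)
      _ = _ := by field_simp
  rw [hthree]
  linarith
end
end

section
/- Let ψ : ℝ^n → ℝ be μ-strongly convex (μ > 0) and let F : ℝ^n → ℝ be convex and differentiable with X̄ = argmin F nonempty and F̄ = min F. If F satisfies the Bregman distance growth condition with constant γ > 0 with respect to ψ, i.e., F(x) − F̄ ≥ γ·inf_{z∈X̄} D_ψ^{x*}(x, z) for every x ∈ ℝ^n and every x* ∈ ∂ψ(x), then F satisfies the Polyak–Łojasiewicz inequality: (γμ/2)·(F(x) − F̄) ≤ ‖∇F(x)‖² for all x ∈ ℝ^n (equivalently, √(γμ/2)·√(F(x) − F̄) ≤ ‖∇F(x)‖). -/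
/-!
At a point `z` with gap `δ = F z - F̄`, the gradient inequality for `F` and Cauchy–Schwarz give
`δ ≤ ‖∇F(z)‖ ‖w - z‖` for every minimizer `w`. Strong convexity of `ψ` bounds `‖w - z‖²` by
`(2/μ) D_ψ(z, w)`, so `(μ/2) δ² ≤ ‖∇F(z)‖² D_ψ(z, w)`. Taking the infimum over `w` and applying
the growth condition yields `(γμ/2) δ² ≤ ‖∇F(z)‖² δ`, and `δ` cancels.

The growth condition speaks only about points with a subgradient of `ψ`; `exists_isSubgrad`
shows that a finite convex function on `ℝⁿ` has one everywhere, by separating `(z, ψ z)` from the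
strict epigraph, which is open because `ψ` is continuous.
-/

open MeasureTheory ProbabilityTheory RealInnerProductSpace
open scoped BigOperators

noncomputable section

lemma exists_isSubgrad_s19 {n : ℕ} {ψ : EuclideanSpace ℝ (Fin n) → ℝ}
    (hψ : ConvexOn ℝ Set.univ ψ) (z : EuclideanSpace ℝ (Fin n)) : ∃ zs, IsSubgrad ψ z zs := by
  have hcont : Continuous ψ := hψ.locallyLipschitz.continuous
  have hconv := hψ.convex_strict_epigraph
  have hopen : IsOpen {p : EuclideanSpace ℝ (Fin n) × ℝ | p.1 ∈ Set.univ ∧ ψ p.1 < p.2} := by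
    simpa using isOpen_lt (hcont.comp continuous_fst) continuous_snd
  obtain ⟨f, hf⟩ := geometric_hahn_banach_point_open (x := (z, ψ z)) hconv hopen (by simp)
  have hsplit : ∀ y t, f (y, t) = f (y, 0) + t * f (0, 1) := by
    intro y t
    rw [← smul_eq_mul, ← map_smul, ← map_add]
    simp
  have hsep : ∀ y t, ψ y < t → f (z, 0) + ψ z * f (0, 1) < f (y, 0) + t * f (0, 1) := by
    intro y t ht
    rw [← hsplit, ← hsplit]
    exact hf (y, t) ⟨Set.mem_univ _, ht⟩
  -- The separating hyperplane is not vertical: test it at a point straight above `(z, ψ z)`.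
  have hc : 0 < f (0, 1) := by
    have := hsep z (ψ z + 1) (by linarith)
    linarith
  have hle : ∀ y, f (z, 0) + ψ z * f (0, 1) ≤ f (y, 0) + ψ y * f (0, 1) := by
    intro y
    refine le_of_forall_pos_lt_add fun ε hε => ?_
    have := hsep y (ψ y + ε / f (0, 1)) (by linarith [div_pos hε hc])
    rw [add_mul, div_mul_cancel₀ _ hc.ne'] at this
    linarith
  let l : StrongDual ℝ (EuclideanSpace ℝ (Fin n)) := f.comp (ContinuousLinearMap.inl ℝ _ ℝ)
  refine ⟨-(f (0, 1))⁻¹ • (InnerProductSpace.toDual ℝ _).symm l, fun y => ?_⟩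
  rw [real_inner_smul_left, InnerProductSpace.toDual_symm_apply, map_sub]
  have h1 : ∀ v, l v = f (v, 0) := fun v => by simp [l]
  rw [h1, h1]
  have h2 : (f (0, 1))⁻¹ * (f (z, 0) - f (y, 0)) ≤ ψ y - ψ z := by
    rw [inv_mul_le_iff₀ hc]
    linarith [hle y]
  linarith

lemma gradient_ineq {n : ℕ} {F : EuclideanSpace ℝ (Fin n) → ℝ} (hF : ConvexOn ℝ Set.univ F)
    {z g : EuclideanSpace ℝ (Fin n)} (hg : HasGradientAt F g z) (w : EuclideanSpace ℝ (Fin n)) :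
    F z + ⟪g, w - z⟫ ≤ F w := by
  have hline : ConvexOn ℝ Set.univ (F ∘ AffineMap.lineMap (k := ℝ) z w) := by
    simpa using hF.comp_affineMap (AffineMap.lineMap z w)
  have hderiv : HasDerivAt (F ∘ AffineMap.lineMap (k := ℝ) z w) ⟪g, w - z⟫ 0 := by
    have h := hg.hasFDerivAt
    rw [← AffineMap.lineMap_apply_zero (k := ℝ) z w] at h
    simpa using h.comp_hasDerivAt (0 : ℝ) AffineMap.hasDerivAt_lineMap
  have := hline.le_slope_of_hasDerivAt (Set.mem_univ 0) (Set.mem_univ 1) one_pos hderiv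
  simp [slope_def_field] at this
  linarith

/-- BDGC implies the Polyak–Łojasiewicz inequality:
if `F(x) − F̄ ≥ γ·inf_{z∈X̄} D_ψ^{x*}(x, z)` for every `x` and every `x* ∈ ∂ψ(x)`, then
`(γμ/2)(F(x) − F̄) ≤ ‖∇F(x)‖²` for all `x`. -/
theorem stmt19 {n : ℕ} (ψ : EuclideanSpace ℝ (Fin n) → ℝ) (μ : ℝ) (hμ : 0 < μ)
    (hψconv : ConvexOn ℝ Set.univ ψ) (hsc : SubgradStrongConvex ψ μ)
    (F : EuclideanSpace ℝ (Fin n) → ℝ) (hFconv : ConvexOn ℝ Set.univ F)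
    (F' : EuclideanSpace ℝ (Fin n) → EuclideanSpace ℝ (Fin n))
    (hFdiff : ∀ z, HasGradientAt F (F' z) z)
    (hXne : {z | ∀ y, F z ≤ F y}.Nonempty)
    (γ : ℝ) (hγ : 0 < γ)
    (hBDGC : ∀ z zs, IsSubgrad ψ z zs →
      γ * distSq ψ z zs {z | ∀ y, F z ≤ F y} ≤ F z - ⨅ y, F y) :
    ∀ z, γ * μ / 2 * (F z - ⨅ y, F y) ≤ ‖F' z‖ ^ 2 := by
  intro z
  obtain ⟨x₀, hx₀⟩ := hXne
  have hmin : ∀ w, (∀ y, F w ≤ F y) → ⨅ y, F y = F w := fun w hw =>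
    le_antisymm (ciInf_le ⟨F w, by rintro _ ⟨y, rfl⟩; exact hw y⟩ w) (le_ciInf hw)
  obtain ⟨zs, hzs⟩ := exists_isSubgrad_s19 hψconv z
  have hgrowth := hBDGC z zs hzs
  have hδ : 0 ≤ F z - ⨅ y, F y := by
    rw [hmin x₀ hx₀]
    linarith [hx₀ z]
  have hbound : μ / 2 * (F z - ⨅ y, F y) ^ 2
      ≤ ‖F' z‖ ^ 2 * distSq ψ z zs {z | ∀ y, F z ≤ F y} := by
    have : Nonempty {z | ∀ y, F z ≤ F y} := ⟨⟨x₀, hx₀⟩⟩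
    rw [distSq, Real.mul_iInf_of_nonneg (sq_nonneg _)]
    refine le_ciInf fun ⟨w, hw⟩ => ?_
    have hgrad := gradient_ineq hFconv (hFdiff z) w
    have hCS := neg_le_of_abs_le (abs_real_inner_le_norm (F' z) (w - z))
    have hlin : F z - ⨅ y, F y ≤ ‖F' z‖ * ‖w - z‖ := by
      rw [hmin w hw]
      linarith
    have hstrong : μ / 2 * ‖w - z‖ ^ 2 ≤ Breg ψ z zs w := by
      have := hsc z w zs hzs
      unfold Breg
      linarith
    calc μ / 2 * (F z - ⨅ y, F y) ^ 2 ≤ μ / 2 * (‖F' z‖ * ‖w - z‖) ^ 2 := by gcongr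
      _ = ‖F' z‖ ^ 2 * (μ / 2 * ‖w - z‖ ^ 2) := by ring
      _ ≤ ‖F' z‖ ^ 2 * Breg ψ z zs w := by gcongr
  rcases hδ.eq_or_lt with h0 | hpos
  · rw [← h0]
    simp
  · refine le_of_mul_le_mul_right ?_ hpos
    have h1 := mul_le_mul_of_nonneg_left hbound hγ.le
    have h2 := mul_le_mul_of_nonneg_left hgrowth (sq_nonneg ‖F' z‖)
    linarith
end
end
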